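/- Let p > 1 and δ ≥ 0. For every ε > 0 there exists c_ε ≥ 1 depending only on ε, p, and δ such that for all t ≥ 0 and all a, b ∈ ℝ^d: φ_{|a|}(t) ≤ c_ε·φ_{|b|}(t) + ε·|F(a) − F(b)|², where φ_c(t) = ∫₀ᵗ φ'(c+s)(s/(c+s)) ds with φ'(t) = (δ+t)^{p-2} t, and F(a) = (δ+|a|)^{(p-2)/2} a. -/

import Mathlib

/-- The shifted N-function `φ_c(t) = ∫₀ᵗ φ'(c+s) · s/(c+s) ds`, where
`φ'(r) = (δ+r)^(p-2) r`. -/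
noncomputable def shiftPhi (p δ c t : ℝ) : ℝ :=
  ∫ s in (0:ℝ)..t, ((δ + (c + s)) ^ (p - 2) * (c + s)) * (s / (c + s))

noncomputable def psiAux (p A t : ℝ) : ℝ := ∫ s in (0:ℝ)..t, (A + s) ^ (p - 2) * s

theorem shiftPhi_eq (p δ c t : ℝ) (hc : 0 ≤ c) (ht : 0 ≤ t) :
    shiftPhi p δ c t = psiAux p (δ + c) t := by
  unfold shiftPhi psiAux
  apply intervalIntegral.integral_congr
  intro s hs
  rw [Set.uIcc_of_le ht] at hs
  obtain ⟨h0, h1⟩ := hs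
  simp only
  rw [← add_assoc, mul_assoc]
  congr 1
  rcases h0.eq_or_lt with h | h
  · subst h; simp
  · have : c + s ≠ 0 := by positivity
    field_simp

theorem rpow_mul_self_aux {p s : ℝ} (hp : 1 < p) (hs : 0 ≤ s) :
    s ^ (p - 2) * s = s ^ (p - 1) := by
  rcases hs.eq_or_lt with h | h
  · subst h; rw [Real.zero_rpow (by linarith : p - 1 ≠ 0)]; simp
  · rw [← Real.rpow_add_one h.ne']; congr 1; ring

theorem contOn_aux {p A t : ℝ} (hp : 1 < p) (hA : 0 ≤ A) (ht : 0 ≤ t) :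
    IntervalIntegrable (fun s => (A + s) ^ (p - 2) * s) MeasureTheory.volume 0 t := by
  apply ContinuousOn.intervalIntegrable
  rw [Set.uIcc_of_le ht]
  rcases hA.eq_or_lt with h | h
  · subst h
    have : ContinuousOn (fun s : ℝ => s ^ (p - 1)) (Set.Icc 0 t) :=
      (Real.continuous_rpow_const (by linarith)).continuousOn
    refine this.congr ?_
    intro s hs
    simp only [zero_add]
    exact rpow_mul_self_aux hp hs.1
  · refine ContinuousOn.mul (ContinuousOn.rpow_const (by fun_prop) ?_) continuousOn_id
    intro s hs
    left
    have := hs.1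
    positivity

theorem psi_nonneg {p A t : ℝ} (hA : 0 ≤ A) (ht : 0 ≤ t) : 0 ≤ psiAux p A t := by
  apply intervalIntegral.integral_nonneg ht
  intro s hs
  have := hs.1
  positivity

theorem psi_zero {p t : ℝ} (hp : 1 < p) (ht : 0 ≤ t) : psiAux p 0 t = t ^ p / p := by
  have h : psiAux p 0 t = ∫ s in (0:ℝ)..t, s ^ (p - 1) := by
    apply intervalIntegral.integral_congr
    intro s hs
    rw [Set.uIcc_of_le ht] at hs
    simp only [zero_add]
    exact rpow_mul_self_aux hp hs.1
  rw [h, integral_rpow (Or.inl (by linarith))]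
  rw [sub_add_cancel, Real.zero_rpow (by linarith), sub_zero]

theorem const_int (K t : ℝ) : ∫ s in (0:ℝ)..t, K * s = K * (t ^ 2 / 2) := by
  rw [intervalIntegral.integral_const_mul, integral_id]; ring

theorem const_ii (K t : ℝ) :
    IntervalIntegrable (fun s => K * s) MeasureTheory.volume 0 t :=
  Continuous.intervalIntegrable (by fun_prop) _ _

/-- pointwise comparison, with s > 0 -/
theorem psi_le {p A B t C : ℝ} (hp : 1 < p) (hA : 0 ≤ A) (hB : 0 ≤ B) (ht : 0 ≤ t)
    (h : ∀ s, 0 < s → s ≤ t → (A + s) ^ (p - 2) ≤ C * (B + s) ^ (p - 2)) :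
    psiAux p A t ≤ C * psiAux p B t := by
  unfold psiAux
  rw [← intervalIntegral.integral_const_mul]
  apply intervalIntegral.integral_mono_on ht (contOn_aux hp hA ht)
    ((contOn_aux hp hB ht).const_mul C)
  intro s hs
  rcases hs.1.eq_or_lt with h0 | h0
  · subst h0; simp
  · have := mul_le_mul_of_nonneg_right (h s h0 hs.2) h0.le
    linarith

theorem psi_le_top {p A t : ℝ} (hp : 2 ≤ p) (hA : 0 ≤ A) (ht : 0 ≤ t) :
    psiAux p A t ≤ (A + t) ^ (p - 2) * (t ^ 2 / 2) := by
  rw [← const_int]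
  apply intervalIntegral.integral_mono_on ht (contOn_aux (by linarith) hA ht) (const_ii _ _)
  intro s hs
  have h0 := hs.1
  have h1 := hs.2
  exact mul_le_mul_of_nonneg_right
    (Real.rpow_le_rpow (by positivity) (by linarith) (by linarith)) h0

theorem psi_ge_top {p A t : ℝ} (hp1 : 1 < p) (hp : p ≤ 2) (hA : 0 ≤ A) (ht : 0 ≤ t) :
    (A + t) ^ (p - 2) * (t ^ 2 / 2) ≤ psiAux p A t := by
  rw [← const_int]
  apply intervalIntegral.integral_mono_on ht (const_ii _ _) (contOn_aux (by linarith) hA ht)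
  intro s hs
  have h1 := hs.2
  rcases hs.1.eq_or_lt with h0 | h0
  · subst h0; simp
  · exact mul_le_mul_of_nonneg_right
      (Real.rpow_le_rpow_of_nonpos (by positivity) (by linarith) (by linarith)) h0.le

theorem F_gap {p δ x y : ℝ} (hp : 1 < p) (hδ : 0 ≤ δ) (hx : 0 ≤ x) (hy : 0 ≤ y)
    (h : 4 * (δ + y) ≤ δ + x) :
    (δ + x) ^ p / 16 ≤ ((δ + x) ^ ((p - 2) / 2) * x - (δ + y) ^ ((p - 2) / 2) * y) ^ 2 := by
  set X := δ + x with hX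
  set Y := δ + y with hY
  have hX0 : 0 ≤ X := by positivity
  have hY0 : 0 ≤ Y := by positivity
  rcases hX0.eq_or_lt with h0 | h0
  · have : X ^ p = 0 := by rw [← h0, Real.zero_rpow (by linarith)]
    rw [this, zero_div]; exact sq_nonneg _
  have e : X ^ ((p - 2) / 2) * X = X ^ (p / 2) := by
    rw [← Real.rpow_add_one h0.ne']; congr 1; ring
  have h1 : X ^ (p / 2) * (3 / 4) ≤ X ^ ((p - 2) / 2) * x := by
    rw [← e, mul_assoc]
    apply mul_le_mul_of_nonneg_left _ (by positivity)
    linarith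
  have h2 : Y ^ ((p - 2) / 2) * y ≤ Y ^ (p / 2) := by
    rcases hY0.eq_or_lt with h3 | h3
    · have : y = 0 := by linarith
      rw [this, mul_zero]; positivity
    · have : Y ^ ((p - 2) / 2) * Y = Y ^ (p / 2) := by
        rw [← Real.rpow_add_one h3.ne']; congr 1; ring
      rw [← this]
      apply mul_le_mul_of_nonneg_left _ (by positivity)
      linarith
  have h3 : Y ^ (p / 2) ≤ X ^ (p / 2) * (1 / 2) := by
    calc Y ^ (p / 2) ≤ (X * (1 / 4)) ^ (p / 2) :=
          Real.rpow_le_rpow hY0 (by linarith) (by linarith)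
      _ = X ^ (p / 2) * (1 / 4) ^ (p / 2) := Real.mul_rpow hX0 (by norm_num)
      _ ≤ X ^ (p / 2) * (1 / 4) ^ ((1:ℝ) / 2) := by
          apply mul_le_mul_of_nonneg_left _ (by positivity)
          exact Real.rpow_le_rpow_of_exponent_ge (by norm_num) (by norm_num) (by linarith)
      _ = X ^ (p / 2) * (1 / 2) := by
          rw [← Real.sqrt_eq_rpow, show (1:ℝ) / 4 = (1 / 2) ^ 2 by norm_num,
            Real.sqrt_sq (by norm_num)]
  have h4 : X ^ p = (X ^ (p / 2)) ^ 2 := by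
    rw [← Real.rpow_natCast, ← Real.rpow_mul hX0]; congr 1; push_cast; ring
  have h5 : 0 ≤ X ^ (p / 2) := by positivity
  rw [h4]
  nlinarith

theorem F_norm {d : ℕ} {p δ : ℝ} (hδ : 0 ≤ δ) (a b : EuclideanSpace ℝ (Fin d)) :
    ((δ + ‖a‖) ^ ((p - 2) / 2) * ‖a‖ - (δ + ‖b‖) ^ ((p - 2) / 2) * ‖b‖) ^ 2 ≤
      ‖(δ + ‖a‖) ^ ((p - 2) / 2) • a - (δ + ‖b‖) ^ ((p - 2) / 2) • b‖ ^ 2 := by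
  have h := abs_norm_sub_norm_le ((δ + ‖a‖) ^ ((p - 2) / 2) • a) ((δ + ‖b‖) ^ ((p - 2) / 2) • b)
  rw [norm_smul, norm_smul, Real.norm_of_nonneg (by positivity),
    Real.norm_of_nonneg (by positivity)] at h
  rw [← sq_abs]
  exact pow_le_pow_left₀ (abs_nonneg _) h 2

theorem rpow_split {p t : ℝ} (ht : 0 < t) : t ^ (p - 2) * t ^ 2 = t ^ p := by
  rw [← Real.rpow_natCast t 2, ← Real.rpow_add ht]; congr 1; push_cast; ring

theorem main_ge {p ε : ℝ} (hp : 2 ≤ p) (hε : 0 < ε) :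
    ∃ c ≥ (1:ℝ), ∀ t ≥ (0:ℝ), ∀ A B : ℝ, 0 ≤ A → 0 ≤ B →
      (psiAux p A t ≤ c * psiAux p B t) ∨
      (4 * B ≤ A ∧ psiAux p A t ≤ c * psiAux p B t + ε * (A ^ p / 16)) := by
  obtain ⟨η, hη0, hη1, hη2⟩ : ∃ η : ℝ, 0 < η ∧ η ≤ 1 ∧ 2 ^ (p - 2) * η ≤ ε / 8 := by
    have h2 : (0:ℝ) < 2 ^ (p - 2) := by positivity
    refine ⟨min 1 (ε / 8 / 2 ^ (p - 2)), by positivity, min_le_left _ _, ?_⟩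
    rw [← le_div_iff₀' h2]
    exact min_le_right _ _
  set L := (1 / η + 1) ^ (p - 2) with hL
  have hL0 : 0 < L := by positivity
  have h40 : (0:ℝ) < 4 ^ (p - 2) := by positivity
  refine ⟨1 + 4 ^ (p - 2) + p * L, by nlinarith, ?_⟩
  intro t ht A B hA hB
  have hpB := psi_nonneg (p := p) hB ht
  have hpL : 0 < p * L := by positivity
  rcases ht.eq_or_lt with h0 | ht0
  · left; subst h0; simp [psiAux]
  rcases le_total A (4 * B) with h | h
  · left
    have := psi_le (C := 4 ^ (p - 2)) (by linarith : 1 < p) hA hB ht (by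
      intro s hs _
      rw [← Real.mul_rpow (by norm_num) (by positivity)]
      exact Real.rpow_le_rpow (by positivity) (by linarith) (by linarith))
    nlinarith
  have hup := psi_le_top hp hA ht
  rcases le_total t (η * A) with h' | h'
  · right
    refine ⟨h, ?_⟩
    have hA0 : 0 < A := by
      by_contra hc
      have : A = 0 := by linarith
      rw [this] at h'; linarith
    have h1 : (A + t) ^ (p - 2) ≤ 2 ^ (p - 2) * A ^ (p - 2) := by
      rw [← Real.mul_rpow (by norm_num) hA]
      exact Real.rpow_le_rpow (by positivity) (by nlinarith) (by linarith)
    have h2 : t ^ 2 ≤ η * A ^ 2 := by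
      calc t ^ 2 ≤ (η * A) ^ 2 := pow_le_pow_left₀ ht h' 2
        _ = η * η * A ^ 2 := by ring
        _ ≤ η * 1 * A ^ 2 := by gcongr
        _ = _ := by ring
    have h3 : (A + t) ^ (p - 2) * (t ^ 2 / 2) ≤
        (2 ^ (p - 2) * A ^ (p - 2)) * (η * A ^ 2 / 2) := by gcongr
    have h4 : (2 ^ (p - 2) * A ^ (p - 2)) * (η * A ^ 2 / 2) = (2 ^ (p - 2) * η) * A ^ p / 2 := by
      rw [← rpow_split (p := p) hA0]; ring
    have h5 : (2 ^ (p - 2) * η) * A ^ p ≤ ε / 8 * A ^ p := by gcongr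
    have h6 : 0 ≤ (1 + 4 ^ (p - 2) + p * L) * psiAux p B t := by positivity
    linarith
  · left
    have h1 : (A + t) ^ (p - 2) ≤ L * t ^ (p - 2) := by
      rw [hL, ← Real.mul_rpow (by positivity) ht]
      apply Real.rpow_le_rpow (by positivity) _ (by linarith)
      have : A ≤ 1 / η * t := by
        rw [one_div, ← div_eq_inv_mul, le_div_iff₀ hη0]; linarith
      linarith
    have h2 : (A + t) ^ (p - 2) * (t ^ 2 / 2) ≤ L * t ^ (p - 2) * (t ^ 2 / 2) := by gcongr
    have h3 : L * t ^ (p - 2) * (t ^ 2 / 2) = L * t ^ p / 2 := by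
      rw [← rpow_split (p := p) ht0]; ring
    have h4 : t ^ p / p ≤ psiAux p B t := by
      rw [← psi_zero (by linarith) ht, ← one_mul (psiAux p B t)]
      apply psi_le (by linarith) le_rfl hB ht
      intro s hs _
      rw [one_mul]
      exact Real.rpow_le_rpow (by linarith) (by linarith) (by linarith)
    have h5 : p * L * (t ^ p / p) ≤ p * L * psiAux p B t := by gcongr
    have h6 : p * L * (t ^ p / p) = L * t ^ p := by field_simp
    have h7 : 0 ≤ (1 + 4 ^ (p - 2)) * psiAux p B t := by positivity
    have h8 : 0 ≤ L * t ^ p := by positivity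
    linarith

theorem main_lt {p ε : ℝ} (hp1 : 1 < p) (hp : p ≤ 2) (hε : 0 < ε) :
    ∃ c ≥ (1:ℝ), ∀ t ≥ (0:ℝ), ∀ A B : ℝ, 0 ≤ A → 0 ≤ B →
      (psiAux p A t ≤ c * psiAux p B t) ∨
      (4 * A ≤ B ∧ psiAux p A t ≤ c * psiAux p B t + ε * (B ^ p / 16)) := by
  obtain ⟨η, hη0, hη1, hη2⟩ : ∃ η : ℝ, 0 < η ∧ η ≤ 1 ∧ η ≤ ε / 16 :=
    ⟨min 1 (ε / 16), by positivity, min_le_left _ _, min_le_right _ _⟩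
  set L := (1 / η + 1) ^ (p - 2) with hL
  have hL0 : 0 < L := by positivity
  have h40 : (0:ℝ) < 4 ^ (p - 2) := by positivity
  refine ⟨1 + (4 ^ (p - 2))⁻¹ + 2 * L⁻¹, by
    have : 0 < ((4:ℝ) ^ (p - 2))⁻¹ := by positivity
    have : 0 < L⁻¹ := by positivity
    linarith, ?_⟩
  intro t ht A B hA hB
  have hpB := psi_nonneg (p := p) hB ht
  rcases ht.eq_or_lt with h0 | ht0
  · left; subst h0; simp [psiAux]
  rcases le_total B (4 * A) with h | h
  · left
    have := psi_le (C := (4 ^ (p - 2))⁻¹) hp1 hA hB ht (by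
      intro s hs _
      rw [← div_eq_inv_mul, le_div_iff₀' h40, ← Real.mul_rpow (by norm_num) (by positivity)]
      exact Real.rpow_le_rpow_of_nonpos (by positivity) (by linarith) (by linarith))
    have h7 : 0 ≤ (1 + 2 * L⁻¹) * psiAux p B t := by positivity
    linarith
  have hup : psiAux p A t ≤ t ^ p := by
    have h1 : psiAux p A t ≤ 1 * psiAux p 0 t := by
      apply psi_le hp1 hA le_rfl ht
      intro s hs _
      rw [one_mul]
      exact Real.rpow_le_rpow_of_nonpos (by linarith) (by linarith) (by linarith)
    rw [one_mul, psi_zero hp1 ht] at h1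
    exact h1.trans (div_le_self (by positivity) hp1.le)
  rcases le_total t (η * B) with h' | h'
  · right
    refine ⟨h, ?_⟩
    have h1 : t ^ p ≤ η ^ p * B ^ p := by
      rw [← Real.mul_rpow hη0.le hB]
      exact Real.rpow_le_rpow ht h' (by linarith)
    have h2 : η ^ p ≤ ε / 16 := by
      refine le_trans ?_ hη2
      have := Real.rpow_le_rpow_of_exponent_ge hη0 hη1 hp1.le
      rwa [Real.rpow_one] at this
    have h3 : η ^ p * B ^ p ≤ ε / 16 * B ^ p := by gcongr
    have h6 : 0 ≤ (1 + (4 ^ (p - 2))⁻¹ + 2 * L⁻¹) * psiAux p B t := by positivity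
    linarith
  · left
    have h1 : L * t ^ (p - 2) ≤ (B + t) ^ (p - 2) := by
      rw [hL, ← Real.mul_rpow (by positivity) ht]
      apply Real.rpow_le_rpow_of_nonpos (by positivity) _ (by linarith)
      have : B ≤ 1 / η * t := by
        rw [one_div, ← div_eq_inv_mul, le_div_iff₀ hη0]; linarith
      linarith
    have h2 : L * t ^ (p - 2) * (t ^ 2 / 2) ≤ (B + t) ^ (p - 2) * (t ^ 2 / 2) := by gcongr
    have h3 : L * t ^ (p - 2) * (t ^ 2 / 2) = L * t ^ p / 2 := by
      rw [← rpow_split (p := p) ht0]; ring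
    have h4 := psi_ge_top hp1 hp hB ht
    have h5 : 2 * L⁻¹ * (L * t ^ p / 2) ≤ 2 * L⁻¹ * psiAux p B t := by
      apply mul_le_mul_of_nonneg_left _ (by positivity)
      linarith
    have h6 : 2 * L⁻¹ * (L * t ^ p / 2) = t ^ p := by field_simp
    have h7 : 0 ≤ (1 + (4 ^ (p - 2))⁻¹) * psiAux p B t := by positivity
    linarith

theorem stmt5 (d : ℕ) (p δ : ℝ) (hp : 1 < p) (hδ : 0 ≤ δ) :
    ∀ ε > (0:ℝ), ∃ c ≥ (1:ℝ), ∀ t ≥ (0:ℝ), ∀ a b : EuclideanSpace ℝ (Fin d),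
      shiftPhi p δ ‖a‖ t ≤ c * shiftPhi p δ ‖b‖ t +
        ε * ‖(δ + ‖a‖) ^ ((p - 2) / 2) • a - (δ + ‖b‖) ^ ((p - 2) / 2) • b‖ ^ 2 := by
  intro ε hε
  rcases le_total 2 p with h2 | h2
  · obtain ⟨c, hc, H⟩ := main_ge h2 hε
    refine ⟨c, hc, fun t ht a b => ?_⟩
    rw [shiftPhi_eq _ _ _ _ (norm_nonneg a) ht, shiftPhi_eq _ _ _ _ (norm_nonneg b) ht]
    rcases H t ht (δ + ‖a‖) (δ + ‖b‖) (by positivity) (by positivity) with h | ⟨h, h'⟩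
    · exact le_add_of_le_of_nonneg h (by positivity)
    · refine h'.trans ?_
      have := (F_gap hp hδ (norm_nonneg a) (norm_nonneg b) h).trans (F_norm hδ a b)
      gcongr
  · obtain ⟨c, hc, H⟩ := main_lt hp h2 hε
    refine ⟨c, hc, fun t ht a b => ?_⟩
    rw [shiftPhi_eq _ _ _ _ (norm_nonneg a) ht, shiftPhi_eq _ _ _ _ (norm_nonneg b) ht]
    rcases H t ht (δ + ‖a‖) (δ + ‖b‖) (by positivity) (by positivity) with h | ⟨h, h'⟩
    · exact le_add_of_le_of_nonneg h (by positivity)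
    · refine h'.trans ?_
      have := (F_gap hp hδ (norm_nonneg b) (norm_nonneg a) h).trans (F_norm hδ b a)
      rw [norm_sub_rev] at this
      gcongr
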